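/- arXiv:1609.06651 — 2 statements merged into one kernel-verified Lean document; each statement's English description precedes it below -/
import Mathlib

section
/- Let $n$ be a positive integer, $p \in (0,1)$, and let $X$ be a binomial random variable with parameters $n$ and $p$. If $k$ is a positive integer with $np < k \le n$, then the tail conditional expectation satisfies $\mathbb{E}[X \mid X \ge k] \le k + \frac{(n-k)p}{k - np + p}$. -/
/-- The binomial probability mass function: `P[Bin(n,p) = i] = C(n,i) p^i (1-p)^(n-i)`. -/
noncomputable def binPMF (n : ℕ) (p : ℝ) (i : ℕ) : ℝ :=
  (n.choose i : ℝ) * p ^ i * (1 - p) ^ (n - i)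

/-- The binomial tail probability `P[Bin(n,p) ≥ k]`. -/
noncomputable def binTail (n : ℕ) (p : ℝ) (k : ℕ) : ℝ :=
  ∑ i ∈ Finset.Icc k n, binPMF n p i

/-- The tail conditional expectation `E[Bin(n,p) | Bin(n,p) ≥ k]`,
i.e. `E[X · 1_{X ≥ k}] / P[X ≥ k]`. -/
noncomputable def binTCE (n : ℕ) (p : ℝ) (k : ℕ) : ℝ :=
  (∑ i ∈ Finset.Icc k n, (i : ℝ) * binPMF n p i) / binTail n p k

/-!
Put `f i = P[X = i]`. The ratio of consecutive binomial weights makes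
`((n - i) p g(i + 1) - i (1 - p) g(i)) f i` a telescoping difference for every `g`; summing it over
`i ≥ k` gives a Stein identity for the truncated variable. The choice `g i = i - k` kills the
boundary term and leaves
`(k - np + p) E[(X - k)⁺] + E[((X - k)⁺)²] = (n - k) p P[X ≥ k]`,
so dropping the square and dividing gives the bound as soon as `k - np + p > 0`.
-/

open Finset

/-- The expected excess `E[(X - k)⁺]` of a binomial variable over the threshold `k`, through which
the tail conditional expectation is `k + E[(X - k)⁺] / P[X ≥ k]`. The sum starts at `k`, so no
positive part is taken. -/
noncomputable def binExcess (n : ℕ) (p : ℝ) (k : ℕ) : ℝ :=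
  ∑ i ∈ Icc k n, ((i : ℝ) - k) * binPMF n p i

section

variable {n k i : ℕ} {p : ℝ}

lemma binPMF_self (n : ℕ) (p : ℝ) : binPMF n p n = p ^ n := by
  simp [binPMF]

lemma binPMF_eq_zero_of_lt (p : ℝ) (hi : n < i) : binPMF n p i = 0 := by
  simp [binPMF, Nat.choose_eq_zero_of_lt hi]

lemma binPMF_nonneg (n i : ℕ) (hp : 0 ≤ p) (hp1 : p ≤ 1) : 0 ≤ binPMF n p i :=
  mul_nonneg (mul_nonneg (Nat.cast_nonneg _) (pow_nonneg hp i)) (pow_nonneg (sub_nonneg.2 hp1) _)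

lemma binTail_pos (hp : 0 < p) (hp1 : p ≤ 1) (hkn : k ≤ n) : 0 < binTail n p k :=
  calc
    0 < p ^ n := pow_pos hp n
    _ = binPMF n p n := (binPMF_self n p).symm
    _ ≤ binTail n p k :=
      single_le_sum (fun i _ => binPMF_nonneg n i hp.le hp1) (right_mem_Icc.2 hkn)

lemma add_one_mul_binPMF_add_one (n i : ℕ) (p : ℝ) :
    ((i : ℝ) + 1) * (1 - p) * binPMF n p (i + 1) = ((n : ℝ) - i) * p * binPMF n p i := by
  rcases lt_trichotomy n i with hni | rfl | hin
  · simp [binPMF_eq_zero_of_lt p hni, binPMF_eq_zero_of_lt p (hni.trans i.lt_succ_self)]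
  · simp [binPMF_eq_zero_of_lt p n.lt_succ_self]
  · have choose_succ : (n.choose (i + 1) : ℝ) * (i + 1) = n.choose i * (n - i) := by
      rw [← Nat.cast_sub hin.le]
      exact_mod_cast Nat.choose_succ_right_eq n i
    have pow_sub : (1 - p) ^ (n - i) = (1 - p) ^ (n - (i + 1)) * (1 - p) := by
      rw [← pow_succ, show n - (i + 1) + 1 = n - i by omega]
    unfold binPMF
    rw [pow_sub]
    linear_combination p ^ (i + 1) * (1 - p) ^ (n - (i + 1)) * (1 - p) * choose_succ

lemma sum_Icc_stein_binPMF (n k : ℕ) (p : ℝ) (g : ℕ → ℝ) :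
    ∑ i ∈ Icc k n, (((n : ℝ) - i) * p * g (i + 1) - i * (1 - p) * g i) * binPMF n p i =
      -(k * (1 - p) * g k * binPMF n p k) := by
  rcases lt_or_ge n k with hnk | hkn
  · simp [hnk, binPMF_eq_zero_of_lt p hnk]
  let G : ℕ → ℝ := fun i => i * (1 - p) * g i * binPMF n p i
  calc
    _ = ∑ i ∈ Icc k n, (G (i + 1) - G i) := by
      refine sum_congr rfl fun i _ => ?_
      simp only [G, Nat.cast_add_one]
      linear_combination -g (i + 1) * add_one_mul_binPMF_add_one n i p
    _ = G (n + 1) - G k := sum_Icc_sub hkn G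
    _ = -G k := by simp [G, binPMF_eq_zero_of_lt p n.lt_succ_self]

lemma mul_binExcess_add_sum_sq (n k : ℕ) (p : ℝ) :
    ((k : ℝ) - n * p + p) * binExcess n p k +
        ∑ i ∈ Icc k n, ((i : ℝ) - k) ^ 2 * binPMF n p i =
      ((n : ℝ) - k) * p * binTail n p k := by
  have stein := sum_Icc_stein_binPMF n k p fun i => (i : ℝ) - k
  rw [sub_self, mul_zero, zero_mul, neg_zero] at stein
  have expand : ∑ i ∈ Icc k n, (((n : ℝ) - i) * p * ((i + 1 : ℕ) - k) - i * (1 - p) * (i - k)) *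
        binPMF n p i =
      ((n : ℝ) - k) * p * binTail n p k - ((k : ℝ) - n * p + p) * binExcess n p k -
        ∑ i ∈ Icc k n, ((i : ℝ) - k) ^ 2 * binPMF n p i := by
    simp only [binTail, binExcess, mul_sum, ← sum_sub_distrib]
    refine sum_congr rfl fun i _ => ?_
    push_cast
    ring
  linarith

lemma mul_binExcess_le (n k : ℕ) (hp : 0 ≤ p) (hp1 : p ≤ 1) :
    ((k : ℝ) - n * p + p) * binExcess n p k ≤ ((n : ℝ) - k) * p * binTail n p k := by
  rw [← mul_binExcess_add_sum_sq]
  exact le_add_of_nonneg_right <|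
    sum_nonneg fun i _ => mul_nonneg (sq_nonneg _) (binPMF_nonneg n i hp hp1)

lemma binTCE_eq_add_binExcess_div (hT : binTail n p k ≠ 0) :
    binTCE n p k = k + binExcess n p k / binTail n p k := by
  simp only [binExcess, sub_mul, sum_sub_distrib, ← mul_sum]
  rw [← binTail, sub_div, mul_div_cancel_right₀ _ hT, add_sub_cancel, binTCE]

theorem binomial_tail_conditional_expectation_upper_bound_general
    (hp : 0 < p) (hp1 : p ≤ 1) (hlow : (n : ℝ) * p < k + p) (hkn : k ≤ n) :
    binTCE n p k ≤ (k : ℝ) + ((n : ℝ) - k) * p / ((k : ℝ) - n * p + p) := by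
  have tail_pos : 0 < binTail n p k := binTail_pos hp hp1 hkn
  have denom_pos : 0 < (k : ℝ) - n * p + p := by linarith
  rw [binTCE_eq_add_binExcess_div tail_pos.ne', add_le_add_iff_left,
    div_le_div_iff₀ tail_pos denom_pos, mul_comm]
  exact mul_binExcess_le n k hp.le hp1

end

theorem binomial_tail_conditional_expectation_upper_bound
    (n k : ℕ) (p : ℝ) (hn : 0 < n) (hp : 0 < p) (hp1 : p < 1)
    (hk : 0 < k) (hlow : (n : ℝ) * p < k) (hkn : k ≤ n) :
    binTCE n p k ≤ (k : ℝ) + ((n : ℝ) - k) * p / ((k : ℝ) - n * p + p) :=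
  binomial_tail_conditional_expectation_upper_bound_general hp hp1.le (by linarith) hkn
end

section
/- Let $\mu > 0$ and let $Y$ be a Poisson random variable with mean $\mu$. If $k$ is a positive integer with $k \ge \mu$, and $\ell := \lfloor k - \mu \rfloor$, then $\mathbb{P}[Y \ge k] \ge \frac{1}{2} \left( \frac{\mu}{k + \mu} \right)^{\ell + 1}$. -/
/-- The Poisson probability mass function: `P[Poi(μ) = i] = exp(-μ) μ^i / i!`. -/
noncomputable def poiPMF (μ : ℝ) (i : ℕ) : ℝ :=
  Real.exp (-μ) * μ ^ i / (Nat.factorial i : ℝ)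

/-- The Poisson tail probability `P[Poi(μ) ≥ k]`. -/
noncomputable def poiTail (μ : ℝ) (k : ℕ) : ℝ :=
  ∑' j : ℕ, poiPMF μ (k + j)

/-- The tail conditional expectation `E[Poi(μ) | Poi(μ) ≥ k]`,
i.e. `E[Y · 1_{Y ≥ k}] / P[Y ≥ k]`. -/
noncomputable def poiTCE (μ : ℝ) (k : ℕ) : ℝ :=
  (∑' j : ℕ, ((k + j : ℕ) : ℝ) * poiPMF μ (k + j)) / poiTail μ k

/-!
Let `n := k - (ℓ + 1)`, so that `n ≤ μ`. For `j < n`,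
`P[Y = n - 1 - j] / P[Y = n + j] = ∏_{|i| ≤ j} (n + i) / μ ≤ 1`, because
`(n - i) (n + i) ≤ n ^ 2 ≤ μ ^ 2`. So the mass below `n` is at most the mass from `n` on, whence
`P[Y ≥ n] ≥ 1 / 2`. Each of the `ℓ + 1` steps `j → j + 1` from `n` up to `k` multiplies the tail by
at least `μ / (j + 1 + μ) ≥ μ / (k + μ)`, since
`μ P[Y ≥ j] = (j + 1) P[Y = j + 1] + μ P[Y ≥ j + 1] ≤ (j + 1 + μ) P[Y ≥ j + 1]`.
-/

section PoissonTail

variable {μ : ℝ}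

lemma poiPMF_nonneg (hμ : 0 ≤ μ) (i : ℕ) : 0 ≤ poiPMF μ i := by
  unfold poiPMF
  positivity

lemma add_one_mul_poiPMF_add_one (μ : ℝ) (i : ℕ) :
    ((i : ℝ) + 1) * poiPMF μ (i + 1) = μ * poiPMF μ i := by
  unfold poiPMF
  rw [Nat.factorial_succ, pow_succ]
  push_cast
  field_simp

lemma hasSum_poiPMF (μ : ℝ) : HasSum (poiPMF μ) 1 := by
  have h := (NormedSpace.expSeries_div_hasSum_exp μ).mul_left (Real.exp (-μ))
  rw [← Real.exp_eq_exp_ℝ, ← Real.exp_add, neg_add_cancel, Real.exp_zero] at h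
  simp_rw [← mul_div_assoc] at h
  exact h

lemma summable_poiPMF_add (μ : ℝ) (k : ℕ) : Summable fun j ↦ poiPMF μ (k + j) := by
  simpa only [add_comm k] using (summable_nat_add_iff k).2 (hasSum_poiPMF μ).summable

lemma poiTail_nonneg (hμ : 0 ≤ μ) (k : ℕ) : 0 ≤ poiTail μ k :=
  tsum_nonneg fun _ ↦ poiPMF_nonneg hμ _

lemma poiTail_eq_poiPMF_add_poiTail (μ : ℝ) (k : ℕ) :
    poiTail μ k = poiPMF μ k + poiTail μ (k + 1) := by
  unfold poiTail
  rw [(summable_poiPMF_add μ k).tsum_eq_zero_add]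
  simp only [add_zero, add_assoc, add_comm 1]

lemma poiPMF_le_poiTail (hμ : 0 ≤ μ) (k : ℕ) : poiPMF μ k ≤ poiTail μ k := by
  rw [poiTail_eq_poiPMF_add_poiTail]
  exact le_add_of_nonneg_right (poiTail_nonneg hμ _)

lemma sum_range_poiPMF_add_poiTail (μ : ℝ) (n : ℕ) :
    ∑ i ∈ Finset.range n, poiPMF μ i + poiTail μ n = 1 := by
  simpa only [poiTail, add_comm n, (hasSum_poiPMF μ).tsum_eq] using
    (hasSum_poiPMF μ).summable.sum_add_tsum_nat_add n

lemma poiPMF_le_poiPMF_add_two_mul_add_one {m j : ℕ} (h : (m : ℝ) + j + 1 ≤ μ) :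
    poiPMF μ m ≤ poiPMF μ (m + 2 * j + 1) := by
  have hμ : 0 < μ := by linarith [m.cast_nonneg (α := ℝ), j.cast_nonneg (α := ℝ)]
  induction j generalizing m with
  | zero =>
    refine le_of_mul_le_mul_left ?_ hμ
    rw [← add_one_mul_poiPMF_add_one]
    exact mul_le_mul_of_nonneg_right (by simpa using h) (poiPMF_nonneg hμ.le _)
  | succ j ih =>
    push_cast at h
    have inner : poiPMF μ (m + 1) ≤ poiPMF μ (m + 2 * j + 2) := by
      convert ih (m := m + 1) (by push_cast; linarith) using 2
      ring
    have up := add_one_mul_poiPMF_add_one μ (m + 2 * j + 2)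
    push_cast at up
    have centre : ((m : ℝ) + 1) * (m + 2 * j + 2 + 1) ≤ μ ^ 2 :=
      calc ((m : ℝ) + 1) * (m + 2 * j + 2 + 1) ≤ (m + (j + 1) + 1) ^ 2 := by
            linarith [sq_nonneg ((j : ℝ) + 1)]
        _ ≤ μ ^ 2 := by gcongr
    refine le_of_mul_le_mul_left ?_ (pow_pos hμ 2)
    calc μ ^ 2 * poiPMF μ m = μ * ((m + 1) * poiPMF μ (m + 1)) := by
          rw [add_one_mul_poiPMF_add_one]; ring
      _ ≤ μ * ((m + 1) * poiPMF μ (m + 2 * j + 2)) := by gcongr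
      _ = (m + 1) * (m + 2 * j + 2 + 1) * poiPMF μ (m + 2 * j + 2 + 1) := by
          rw [mul_assoc, up]; ring
      _ ≤ μ ^ 2 * poiPMF μ (m + 2 * (j + 1) + 1) :=
          mul_le_mul_of_nonneg_right centre (poiPMF_nonneg hμ.le _)

lemma sum_range_poiPMF_le_poiTail {n : ℕ} (hn : (n : ℝ) ≤ μ) :
    ∑ i ∈ Finset.range n, poiPMF μ i ≤ poiTail μ n := by
  have reflect : ∀ j ∈ Finset.range n, poiPMF μ (n - 1 - j) ≤ poiPMF μ (n + j) := by
    intro j hj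
    obtain ⟨m, rfl⟩ := Nat.exists_eq_add_of_lt (Finset.mem_range.1 hj)
    push_cast at hn
    convert poiPMF_le_poiPMF_add_two_mul_add_one (m := m) (j := j) (by linarith) using 2 <;> lia
  calc ∑ i ∈ Finset.range n, poiPMF μ i
      = ∑ j ∈ Finset.range n, poiPMF μ (n - 1 - j) := (Finset.sum_range_reflect _ n).symm
    _ ≤ ∑ j ∈ Finset.range n, poiPMF μ (n + j) := Finset.sum_le_sum reflect
    _ ≤ poiTail μ n := (summable_poiPMF_add μ n).sum_le_tsum _
        fun _ _ ↦ poiPMF_nonneg (n.cast_nonneg.trans hn) _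

lemma half_le_poiTail {n : ℕ} (hn : (n : ℝ) ≤ μ) : 1 / 2 ≤ poiTail μ n := by
  linarith [sum_range_poiPMF_le_poiTail hn, sum_range_poiPMF_add_poiTail μ n]

lemma mul_poiTail_le_mul_poiTail_add_one (hμ : 0 ≤ μ) (j : ℕ) :
    μ * poiTail μ j ≤ (j + 1 + μ) * poiTail μ (j + 1) :=
  calc μ * poiTail μ j = (j + 1) * poiPMF μ (j + 1) + μ * poiTail μ (j + 1) := by
        rw [poiTail_eq_poiPMF_add_poiTail, mul_add, add_one_mul_poiPMF_add_one]
    _ ≤ (j + 1) * poiTail μ (j + 1) + μ * poiTail μ (j + 1) := by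
        gcongr
        exact poiPMF_le_poiTail hμ _
    _ = (j + 1 + μ) * poiTail μ (j + 1) := by ring

lemma pow_mul_poiTail_le_poiTail_add (hμ : 0 ≤ μ) (n m : ℕ) :
    (μ / ((n + m : ℕ) + μ)) ^ m * poiTail μ n ≤ poiTail μ (n + m) := by
  refine geom_le (u := fun i ↦ poiTail μ (n + i)) (by positivity) m fun i hi ↦ ?_
  have hpos : (0 : ℝ) < (n + m : ℕ) + μ := add_pos_of_pos_of_nonneg (by norm_cast; lia) hμ
  have hle : ((n + i : ℕ) : ℝ) + 1 ≤ (n + m : ℕ) := by norm_cast; lia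
  rw [div_mul_eq_mul_div, div_le_iff₀' hpos]
  calc μ * poiTail μ (n + i) ≤ ((n + i : ℕ) + 1 + μ) * poiTail μ (n + i + 1) :=
        mul_poiTail_le_mul_poiTail_add_one hμ _
    _ ≤ ((n + m : ℕ) + μ) * poiTail μ (n + i + 1) :=
        mul_le_mul_of_nonneg_right (by gcongr) (poiTail_nonneg hμ _)

end PoissonTail

theorem poisson_tail_lower_bound
    (μ : ℝ) (k : ℕ) (hμ : 0 < μ) (hk : 0 < k) (hkμ : μ ≤ k)
    (ℓ : ℕ) (hℓ : ℓ = ⌊(k : ℝ) - μ⌋₊) :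
    poiTail μ k ≥ 1 / 2 * (μ / ((k : ℝ) + μ)) ^ (ℓ + 1) := by
  have hℓ_le : (ℓ : ℝ) ≤ k - μ := hℓ ▸ Nat.floor_le (sub_nonneg.2 hkμ)
  have hlt_ℓ : (k : ℝ) - μ < ℓ + 1 := hℓ ▸ Nat.lt_floor_add_one _
  have hℓk : ℓ + 1 ≤ k := by
    have : (ℓ : ℝ) < k := by linarith
    exact_mod_cast this
  obtain ⟨n, rfl⟩ := Nat.exists_eq_add_of_le' hℓk
  have hn : (n : ℝ) ≤ μ := by
    push_cast at hlt_ℓ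
    linarith
  calc 1 / 2 * (μ / ((n + (ℓ + 1) : ℕ) + μ)) ^ (ℓ + 1)
      ≤ poiTail μ n * (μ / ((n + (ℓ + 1) : ℕ) + μ)) ^ (ℓ + 1) := by
        gcongr
        exact half_le_poiTail hn
    _ ≤ poiTail μ (n + (ℓ + 1)) := by
        rw [mul_comm]
        exact pow_mul_poiTail_le_poiTail_add hμ.le n (ℓ + 1)
end
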